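/- Fix an integer n ≥ 3 and let Γ_n := {(n,1,0,1), (n+1,0,1,0), (0,0,n+1,0), (0,0,0,n+1), (0,n+1,0,0)} ⊆ ℕ_0^4. Then E_n(Γ_n) = Γ_n, while the (n+1)-completion satisfies E_{n+1}^∞(Γ_n) = Λ(Γ_n) ∩ ℕ_0^4. -/

import Mathlib

open MeasureTheory
open scoped Classical ENNReal

noncomputable section

/-- The `d`-dimensional torus, modelled as `d` copies of `ℝ/ℤ`,
whose product `volume` measure is the normalized Haar measure. -/
abbrev Torus (d : ℕ) := Fin d → AddCircle (1 : ℝ)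

/-- The character `z ↦ z^α` on the torus. -/
def torusChar {d : ℕ} (α : Fin d → ℤ) (x : Torus d) : ℂ :=
  ∏ j, fourier (α j) (x j)

/-- The trigonometric polynomial with frequencies in `F` and coefficients `a`. -/
def trigPoly {d : ℕ} (F : Finset (Fin d → ℤ)) (a : (Fin d → ℤ) → ℂ) (x : Torus d) : ℂ :=
  ∑ α ∈ F, a α * torusChar α x

/-- The set `ℕ₀^d` of multi-indices with nonnegative entries. -/
def NN (d : ℕ) : Set (Fin d → ℤ) := {α | ∀ j, 0 ≤ α j}

/-- `Λ` is a coset in `ℤ^d`, i.e. a translate of a subgroup. -/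
def IsCoset {d : ℕ} (Λ : Set (Fin d → ℤ)) : Prop :=
  ∃ (x : Fin d → ℤ) (H : AddSubgroup (Fin d → ℤ)),
    Λ = (x + ·) '' (H : Set (Fin d → ℤ))

/-- `Λ` is a contractive projection set for `L^p(𝕋^d)`:
the projection onto frequencies in `Λ` is contractive on trigonometric polynomials. -/
def IsContractiveLp (d : ℕ) (p : ℝ≥0∞) (Λ : Set (Fin d → ℤ)) : Prop :=
  ∀ (F : Finset (Fin d → ℤ)) (a : (Fin d → ℤ) → ℂ),
    eLpNorm (trigPoly (F.filter (· ∈ Λ)) a) p volume ≤ eLpNorm (trigPoly F a) p volume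

/-- `Γ` is a contractive projection set for `H^p(𝕋^d)`:
the projection onto frequencies in `Γ` is contractive on analytic polynomials. -/
def IsContractiveHp (d : ℕ) (p : ℝ≥0∞) (Γ : Set (Fin d → ℤ)) : Prop :=
  ∀ F : Finset (Fin d → ℤ), ↑F ⊆ NN d → ∀ a : (Fin d → ℤ) → ℂ,
    eLpNorm (trigPoly (F.filter (· ∈ Γ)) a) p volume ≤ eLpNorm (trigPoly F a) p volume

/-- `Γ` has dimension `k`: the subgroup generated by the differences `γ - γ₀` has rank `k`. -/
def HasDim {d : ℕ} (Γ : Set (Fin d → ℤ)) (k : ℕ) : Prop :=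
  ∀ γ₀ ∈ Γ, Module.finrank ℤ (Submodule.span ℤ ((· - γ₀) '' Γ)) = k

/-- `H^p(𝕋^d)` enjoys the contractive restriction property of dimension `k`:
every `k`-dimensional contractive projection set for `H^p(𝕋^d)` is the restriction
of a coset in `ℤ^d` to `ℕ₀^d`. -/
def ContractiveRestrictionProperty (d : ℕ) (p : ℝ≥0∞) (k : ℕ) : Prop :=
  ∀ Γ : Set (Fin d → ℤ), Γ.Nonempty → Γ ⊆ NN d → HasDim Γ k → IsContractiveHp d p Γ →
    ∃ Λ : Set (Fin d → ℤ), IsCoset Λ ∧ Γ = Λ ∩ NN d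

/-- The coset `Λ(Γ)` in `ℤ^d` generated by `Γ`. -/
def cosetGen {d : ℕ} (Γ : Set (Fin d → ℤ)) : Set (Fin d → ℤ) :=
  ⋃ γ₀ ∈ Γ, (γ₀ + ·) '' (AddSubgroup.closure ((· - γ₀) '' Γ) : Set (Fin d → ℤ))

/-- The `n`-extension `E_n(Γ)`: all points of `Λ(Γ) ∩ ℕ₀^d` at distance at most `n` from `Γ`. -/
def Eext {d : ℕ} (n : ℕ) (Γ : Set (Fin d → ℤ)) : Set (Fin d → ℤ) :=
  {lam | lam ∈ cosetGen Γ ∩ NN d ∧ ∃ γ ∈ Γ, ∃ m : (Fin d → ℤ) →₀ ℤ,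
    (↑m.support : Set (Fin d → ℤ)) ⊆ Γ \ {γ} ∧
    lam = γ + ∑ α ∈ m.support, m α • (α - γ) ∧
    (∑ α ∈ m.support, max (m α) 0) ≤ (n : ℤ) ∧
    (∑ α ∈ m.support, max (-(m α)) 0) ≤ (n : ℤ)}

/-- Iterated `n`-extensions `E_n^k(Γ)`. -/
def EextIter {d : ℕ} (n : ℕ) : ℕ → Set (Fin d → ℤ) → Set (Fin d → ℤ)
  | 0, Γ => Eext n Γ
  | (k + 1), Γ => Eext n (EextIter n k Γ)

/-- The `n`-completion `E_n^∞(Γ)`. -/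
def EextInf {d : ℕ} (n : ℕ) (Γ : Set (Fin d → ℤ)) : Set (Fin d → ℤ) :=
  ⋃ k, EextIter n k Γ

/-- The set `Γ_n = {(n,1,0,1), (n+1,0,1,0), (0,0,n+1,0), (0,0,0,n+1), (0,n+1,0,0)}`
of Example 4.4. -/
def GammaFive (n : ℕ) : Set (Fin 4 → ℤ) :=
  {![(n : ℤ), 1, 0, 1], ![(n : ℤ) + 1, 0, 1, 0], ![0, 0, (n : ℤ) + 1, 0],
    ![0, 0, 0, (n : ℤ) + 1], ![0, (n : ℤ) + 1, 0, 0]}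

/-! A point of `E_n(Γ)` is an affine integer combination of `Γ` whose negative coefficients sum to
at least `-n`. For `Γ_n` write `a, b, c, d, e` for the five coefficients. The coordinate
inequalities `b + (n + 1) c ≥ 0`, `a + (n + 1) d ≥ 0` and `a + (n + 1) e ≥ 0` force a coefficient
`n + 1` on `a` or `b` as soon as one of `c, d, e` is negative. If the negative coefficients sum to
at least `-n`, the positive ones sum to at most `n + 1`, so this uses them up, which is impossible
for `n ≥ 3`; hence `c, d, e ≥ 0`. Then `a < 0` would force `a + b ≥ 0` and `d, e ≥ 1`, and `b < 0`
would force `a + b ≥ 1` and `c ≥ 1`, so the total would exceed `1`. With negative mass `n + 1`, on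
the other hand, the coefficients `-(n + 1), n, 0, 1, 1` yield `(0, 0, n, 0)`. Since `E_m` with
`m ≥ 1` is closed under `x + y - z`, walking from `(0, 0, n + 1, 0)` in steps of `(0, 0, -1, 0)`
reaches the origin, and a completion containing the origin is the whole of `Λ(Γ) ∩ ℕ₀^d`. -/

section NegMass

variable {ι κ : Type*}

/-- The negative mass of an integer weight function, i.e. minus the sum of its negative values.
For weights of total `1` it measures the distance that enters the definition of `E_n`. -/
def negMass (c : ι →₀ ℤ) : ℤ := c.sum fun _ k => max (-k) 0

lemma negMass_eq_sum_of_support_subset {c : ι →₀ ℤ} {s : Finset ι} (h : c.support ⊆ s) :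
    negMass c = ∑ i ∈ s, max (-c i) 0 :=
  Finsupp.sum_of_support_subset c h _ (by simp)

lemma negMass_eq_sum [Fintype ι] (c : ι →₀ ℤ) : negMass c = ∑ i, max (-c i) 0 :=
  negMass_eq_sum_of_support_subset (Finset.subset_univ _)

@[simp]
lemma negMass_zero : negMass (0 : ι →₀ ℤ) = 0 := Finsupp.sum_zero_index

@[simp]
lemma negMass_single (i : ι) (k : ℤ) : negMass (Finsupp.single i k) = max (-k) 0 :=
  Finsupp.sum_single_index (by simp)

lemma negMass_add_le (c c' : ι →₀ ℤ) : negMass (c + c') ≤ negMass c + negMass c' := by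
  rw [negMass_eq_sum_of_support_subset Finsupp.support_add,
    negMass_eq_sum_of_support_subset (Finset.subset_union_left (s₂ := c'.support)),
    negMass_eq_sum_of_support_subset (Finset.subset_union_right (s₁ := c.support)),
    ← Finset.sum_add_distrib]
  gcongr with i
  rw [Finsupp.add_apply]
  omega

lemma negMass_mapDomain_le (f : ι → κ) (c : ι →₀ ℤ) : negMass (c.mapDomain f) ≤ negMass c :=
  (Finset.le_sum_of_subadditive negMass negMass_zero.le negMass_add_le _ _).trans_eq <| by
    simp only [negMass_single]
    rfl

lemma sum_max_zero_eq_degree_add_negMass (c : ι →₀ ℤ) :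
    ∑ i ∈ c.support, max (c i) 0 = c.degree + negMass c := by
  rw [negMass, Finsupp.sum, Finsupp.degree_apply, ← Finset.sum_add_distrib]
  exact Finset.sum_congr rfl fun i _ => by omega

lemma exists_pos_of_degree_pos {c : ι →₀ ℤ} (h : 0 < c.degree) : ∃ i ∈ c.support, 0 < c i :=
  Finset.exists_lt_of_sum_lt (by simpa [← Finsupp.degree_apply] using h)

end NegMass

section Extension

variable {d n : ℕ} {Γ : Set (Fin d → ℤ)} {x y z : Fin d → ℤ}

lemma cosetGen_eq_affineSpan (Γ : Set (Fin d → ℤ)) : cosetGen Γ = affineSpan ℤ Γ := by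
  ext x
  simp only [cosetGen, Set.mem_iUnion, Set.mem_image, SetLike.mem_coe, exists_prop]
  refine exists_congr fun γ => and_congr_right fun hγ => exists_congr fun v => ?_
  rw [vectorSpan_eq_span_vsub_set_right ℤ hγ, ← Submodule.span_int_eq_addSubgroupClosure]
  simp [eq_comm, add_comm]

lemma linearCombination_id_eq_add_sum (c : (Fin d → ℤ) →₀ ℤ) (γ : Fin d → ℤ) :
    Finsupp.linearCombination ℤ id c = c.degree • γ + ∑ α ∈ c.support, c α • (α - γ) := by
  simp [Finsupp.linearCombination_apply, Finsupp.sum, Finsupp.degree_apply, smul_sub,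
    Finset.sum_smul]

lemma linearCombination_id_mem_cosetGen {c : (Fin d → ℤ) →₀ ℤ}
    (hc : c ∈ Finsupp.supported ℤ ℤ Γ) (hdeg : c.degree = 1) :
    Finsupp.linearCombination ℤ id c ∈ cosetGen Γ := by
  obtain ⟨γ, hγ, -⟩ := exists_pos_of_degree_pos (hdeg ▸ one_pos)
  rw [cosetGen_eq_affineSpan, linearCombination_id_eq_add_sum c γ, hdeg, one_smul, add_comm]
  exact vadd_mem_affineSpan_of_mem_affineSpan_of_mem_vectorSpan
    (subset_affineSpan ℤ Γ (hc hγ))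
    (sum_mem fun α hα => zsmul_mem (vsub_mem_vectorSpan ℤ (hc hα) (hc hγ)) _)

lemma exists_weights_of_mem_Eext (hx : x ∈ Eext n Γ) :
    ∃ c ∈ Finsupp.supported ℤ ℤ Γ, c.degree = 1 ∧ Finsupp.linearCombination ℤ id c = x ∧
      negMass c ≤ n := by
  obtain ⟨-, γ, hγ, m, hm, hxm, hpos, hneg⟩ := hx
  rw [sum_max_zero_eq_degree_add_negMass] at hpos
  refine ⟨m + Finsupp.single γ (1 - m.degree),
    add_mem (hm.trans Set.sdiff_subset) (Finsupp.single_mem_supported ℤ _ hγ), by simp, ?_, ?_⟩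
  · rw [map_add, linearCombination_id_eq_add_sum m γ, Finsupp.linearCombination_single, hxm, id]
    module
  · have hadd := negMass_add_le m (Finsupp.single γ (1 - m.degree))
    rw [negMass_single] at hadd
    have : negMass m ≤ n := hneg
    omega

lemma mem_Eext_of_weights (hx : x ∈ NN d) {c : (Fin d → ℤ) →₀ ℤ}
    (hc : c ∈ Finsupp.supported ℤ ℤ Γ) (hdeg : c.degree = 1)
    (hcx : Finsupp.linearCombination ℤ id c = x) (hneg : negMass c ≤ n) : x ∈ Eext n Γ := by
  refine ⟨⟨hcx ▸ linearCombination_id_mem_cosetGen hc hdeg, hx⟩, ?_⟩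
  obtain ⟨γ, hγ, hcγ⟩ := exists_pos_of_degree_pos (hdeg ▸ one_pos)
  have herase : (c.erase γ).support = c.support.erase γ := Finsupp.support_erase
  have hsum {M : Type} [AddCommMonoid M] (f : (Fin d → ℤ) → ℤ → M) :
      f γ (c γ) + ∑ α ∈ (c.erase γ).support, f α (c.erase γ α) = ∑ α ∈ c.support, f α (c α) :=
    Finsupp.add_sum_erase c γ f hγ
  refine ⟨γ, hc hγ, c.erase γ, ?_, ?_, ?_, ?_⟩
  · rw [herase, Finset.coe_erase]
    exact Set.sdiff_subset_sdiff_left hc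
  · rw [← hcx, linearCombination_id_eq_add_sum c γ, hdeg, one_smul, ← hsum fun α k => k • (α - γ),
      sub_self, smul_zero, zero_add]
  · have := hsum fun _ k => max k 0
    have := sum_max_zero_eq_degree_add_negMass c
    omega
  · have := hsum fun _ k => max (-k) 0
    have : ∑ α ∈ c.support, max (-c α) 0 ≤ n := hneg
    omega

/-- The base point of the definition of `E_n` takes up one unit of positive mass, so that of the two
bounds there only the one on negative mass remains. -/
lemma mem_Eext_iff : x ∈ Eext n Γ ↔ x ∈ NN d ∧
    ∃ c ∈ Finsupp.supported ℤ ℤ Γ, c.degree = 1 ∧ Finsupp.linearCombination ℤ id c = x ∧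
      negMass c ≤ n :=
  ⟨fun h => ⟨h.1.2, exists_weights_of_mem_Eext h⟩,
    fun ⟨hx, _, hc, hdeg, hcx, hneg⟩ => mem_Eext_of_weights hx hc hdeg hcx hneg⟩

lemma mem_Eext_range_iff {ι : Type*} {g : ι → Fin d → ℤ} : x ∈ Eext n (Set.range g) ↔ x ∈ NN d ∧
    ∃ c : ι →₀ ℤ, c.degree = 1 ∧ Finsupp.linearCombination ℤ g c = x ∧ negMass c ≤ n := by
  rw [mem_Eext_iff]
  refine and_congr_right fun _ => ⟨?_, ?_⟩
  · rintro ⟨c, hc, hdeg, rfl, hneg⟩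
    obtain ⟨α, hα, -⟩ := exists_pos_of_degree_pos (hdeg ▸ one_pos)
    have : Nonempty ι := Set.range_nonempty_iff_nonempty.1 ⟨α, hc hα⟩
    refine ⟨c.mapDomain (Function.invFun g), by simpa using hdeg, ?_,
      (negMass_mapDomain_le _ _).trans hneg⟩
    rw [Finsupp.linearCombination_mapDomain]
    refine Finsupp.sum_congr fun α hα => ?_
    simp only [Function.comp_apply, Function.invFun_eq (hc hα), id]
  · rintro ⟨c, hdeg, rfl, hneg⟩
    refine ⟨c.mapDomain g, ?_, by simpa using hdeg, ?_, (negMass_mapDomain_le _ _).trans hneg⟩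
    · exact (Finset.coe_subset.2 Finsupp.mapDomain_support).trans (by simp)
    · rw [Finsupp.linearCombination_mapDomain, Function.id_comp]

lemma subset_Eext (n : ℕ) (hΓ : Γ ⊆ NN d) : Γ ⊆ Eext n Γ := fun x hx =>
  mem_Eext_of_weights (hΓ hx) (Finsupp.single_mem_supported ℤ 1 hx) (by simp) (by simp) (by simp)

lemma Eext_zero (hΓ : Γ ⊆ NN d) : Eext 0 Γ = Γ := by
  refine Set.Subset.antisymm (fun x hx => ?_) (subset_Eext 0 hΓ)
  obtain ⟨-, γ, hγ, m, -, rfl, hpos, hneg⟩ := hx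
  have hle {f : (Fin d → ℤ) → ℤ} (h : ∑ α ∈ m.support, max (f α) 0 ≤ 0) {α : Fin d → ℤ}
      (hα : α ∈ m.support) : f α ≤ 0 :=
    (le_max_left _ _).trans <|
      (Finset.single_le_sum (f := fun β => max (f β) 0) (fun _ _ => le_max_right _ _) hα).trans h
  have hm : ∀ α ∈ m.support, m α = 0 := fun α hα =>
    (hle hpos hα).antisymm (neg_nonpos.1 (hle hneg hα))
  rwa [Finset.sum_eq_zero fun α hα => by rw [hm α hα, zero_smul], add_zero]

lemma add_sub_mem_Eext (hn : 1 ≤ n) (hx : x ∈ Γ) (hy : y ∈ Γ) (hz : z ∈ Γ)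
    (h : x + y - z ∈ NN d) : x + y - z ∈ Eext n Γ := by
  let p : (Fin d → ℤ) →₀ ℤ := Finsupp.single x 1 + Finsupp.single y 1
  let q : (Fin d → ℤ) →₀ ℤ := Finsupp.single z (-1)
  have hp : negMass p ≤ 0 := by simpa using negMass_add_le (Finsupp.single x 1) (Finsupp.single y 1)
  have hq : negMass q = 1 := negMass_single z (-1)
  refine mem_Eext_of_weights (c := p + q) h ?_ (by simp [p, q]) ?_ ?_
  · exact add_mem (add_mem (Finsupp.single_mem_supported ℤ _ hx)
      (Finsupp.single_mem_supported ℤ _ hy)) (Finsupp.single_mem_supported ℤ _ hz)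
  · simp [p, q, sub_eq_add_neg]
  · have := negMass_add_le p q
    omega

end Extension

section Completion

variable {d n : ℕ} {Γ : Set (Fin d → ℤ)} {x y z : Fin d → ℤ}

lemma EextIter_subset (n k : ℕ) (Γ : Set (Fin d → ℤ)) :
    EextIter n k Γ ⊆ cosetGen Γ ∩ NN d := by
  induction k with
  | zero => exact fun _ hx => hx.1
  | succ k ih =>
    refine fun x hx => ⟨?_, hx.1.2⟩
    have hx' := hx.1.1
    rw [cosetGen_eq_affineSpan] at hx' ih ⊢
    exact affineSpan_le.2 (ih.trans Set.inter_subset_left) hx'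

lemma EextIter_subset_NN (n k : ℕ) (Γ : Set (Fin d → ℤ)) : EextIter n k Γ ⊆ NN d :=
  (EextIter_subset n k Γ).trans Set.inter_subset_right

lemma monotone_EextIter (n : ℕ) (Γ : Set (Fin d → ℤ)) : Monotone fun k => EextIter n k Γ :=
  monotone_nat_of_le_succ fun k => subset_Eext n (EextIter_subset_NN n k Γ)

lemma EextInf_subset (n : ℕ) (Γ : Set (Fin d → ℤ)) : EextInf n Γ ⊆ cosetGen Γ ∩ NN d :=
  Set.iUnion_subset fun k => EextIter_subset n k Γ

lemma Eext_subset_EextInf (n : ℕ) (Γ : Set (Fin d → ℤ)) : Eext n Γ ⊆ EextInf n Γ :=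
  Set.subset_iUnion (fun k => EextIter n k Γ) 0

lemma subset_EextInf (n : ℕ) (hΓ : Γ ⊆ NN d) : Γ ⊆ EextInf n Γ :=
  (subset_Eext n hΓ).trans (Eext_subset_EextInf n Γ)

lemma add_sub_mem_EextInf (hn : 1 ≤ n) (hx : x ∈ EextInf n Γ) (hy : y ∈ EextInf n Γ)
    (hz : z ∈ EextInf n Γ) (h : x + y - z ∈ NN d) : x + y - z ∈ EextInf n Γ := by
  obtain ⟨i, hi⟩ := Set.mem_iUnion.1 hx
  obtain ⟨j, hj⟩ := Set.mem_iUnion.1 hy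
  obtain ⟨k, hk⟩ := Set.mem_iUnion.1 hz
  have hmono := monotone_EextIter n Γ
  refine Set.mem_iUnion.2 ⟨i + j + k + 1, add_sub_mem_Eext hn ?_ ?_ ?_ h⟩
  exacts [hmono (by omega) hi, hmono (by omega) hj, hmono (by omega) hk]

lemma add_nsmul_sub_mem_EextInf (hn : 1 ≤ n) (hx : x ∈ EextInf n Γ) (hy : y ∈ EextInf n Γ)
    {k : ℕ} (h : ∀ i ≤ k, x + i • (y - x) ∈ NN d) : x + k • (y - x) ∈ EextInf n Γ := by
  induction k with
  | zero => simpa using hx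
  | succ k ih =>
    have hstep : x + (k + 1) • (y - x) = x + k • (y - x) + y - x := by module
    have hk := h (k + 1) le_rfl
    rw [hstep] at hk ⊢
    exact add_sub_mem_EextInf hn (ih fun i hi => h i (hi.trans k.le_succ)) hy hx hk

lemma exists_add_mem_of_mem_closure {G : Type*} [AddCommGroup G] (M : AddSubmonoid G) {S : Set G}
    (hS : S ⊆ M) {g : G} (hg : g ∈ AddSubgroup.closure S) : ∃ t ∈ M, g + t ∈ M := by
  induction hg using AddSubgroup.closure_induction_left with
  | zero => exact ⟨0, M.zero_mem, by simp⟩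
  | add_left s hs g _ ih =>
    obtain ⟨t, ht, hgt⟩ := ih
    exact ⟨t, ht, add_assoc s g t ▸ M.add_mem (hS hs) hgt⟩
  | neg_add_cancel s hs g _ ih =>
    obtain ⟨t, ht, hgt⟩ := ih
    exact ⟨s + t, M.add_mem (hS hs) ht, by rwa [show -s + g + (s + t) = g + t by abel]⟩

lemma EextInf_eq_of_zero_mem (hn : 1 ≤ n) (hΓ : Γ ⊆ NN d) (h0 : 0 ∈ EextInf n Γ) :
    EextInf n Γ = cosetGen Γ ∩ NN d := by
  refine (EextInf_subset n Γ).antisymm fun x ⟨hx, hxN⟩ => ?_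
  let M : AddSubmonoid (Fin d → ℤ) :=
    { carrier := EextInf n Γ
      zero_mem' := h0
      add_mem' := fun {s t} hs ht => by
        have hst : s + t ∈ NN d := fun j =>
          add_nonneg ((EextInf_subset n Γ hs).2 j) ((EextInf_subset n Γ ht).2 j)
        simpa using add_sub_mem_EextInf hn hs ht h0 (by simpa using hst) }
  have hxΓ : x ∈ AddSubgroup.closure Γ := by
    rw [cosetGen_eq_affineSpan] at hx
    exact Submodule.span_int_eq_addSubgroupClosure Γ ▸ affineSpan_subset_span hx
  obtain ⟨t, ht, hxt⟩ := exists_add_mem_of_mem_closure M (subset_EextInf n hΓ) hxΓ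
  simpa using add_sub_mem_EextInf hn h0 hxt ht (by simpa using hxN)

end Completion

section GammaFive

variable {n : ℕ}

/-- The five points of `Γ_n`, as a family, so that a linear combination of them has coefficients
indexed by `Fin 5`. -/
def gammaFivePoint (n : ℕ) : Fin 5 → Fin 4 → ℤ :=
  ![![n, 1, 0, 1], ![n + 1, 0, 1, 0], ![0, 0, n + 1, 0], ![0, 0, 0, n + 1], ![0, n + 1, 0, 0]]

lemma range_gammaFivePoint (n : ℕ) : Set.range (gammaFivePoint n) = GammaFive n := by
  simp only [gammaFivePoint, GammaFive, Matrix.range_cons, Matrix.range_empty, Set.union_empty,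
    Set.singleton_union]

lemma linearCombination_gammaFivePoint (n : ℕ) (c : Fin 5 →₀ ℤ) :
    Finsupp.linearCombination ℤ (gammaFivePoint n) c =
      ![n * c 0 + (n + 1) * c 1, c 0 + (n + 1) * c 4, c 1 + (n + 1) * c 2,
        c 0 + (n + 1) * c 3] := by
  rw [Finsupp.linearCombination_apply, Finsupp.sum_fintype _ _ (by simp), Fin.sum_univ_five]
  ext j
  fin_cases j <;> simp [gammaFivePoint, mul_comm]

lemma GammaFive_subset_NN (n : ℕ) : GammaFive n ⊆ NN 4 := by
  have hn : (0 : ℤ) ≤ n + 1 := by positivity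
  rintro _ (rfl | rfl | rfl | rfl | rfl) j <;> fin_cases j <;> simp [hn]

lemma neg_lt_of_lt_mul {t w y k : ℤ} (ht : 0 ≤ t) (h : 0 ≤ w + t * y) (hw : w < t * k) :
    -k < y :=
  lt_of_mul_lt_mul_left (by linarith) ht

section Weights

variable {n a b c d e : ℤ}

lemma nonneg_third_weight (hn : 2 ≤ n) (hsum : a + b + c + d + e = 1)
    (hneg : max (-a) 0 + max (-b) 0 + max (-c) 0 + max (-d) 0 + max (-e) 0 ≤ n)
    (h₁ : 0 ≤ a + (n + 1) * e) (h₂ : 0 ≤ b + (n + 1) * c) (h₃ : 0 ≤ a + (n + 1) * d) : 0 ≤ c := by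
  have ht : 0 ≤ n + 1 := by omega
  by_contra! hc
  have hb : n + 1 ≤ b := by
    by_contra! hb
    have := neg_lt_of_lt_mul (k := 1) ht h₂ (by omega)
    omega
  have hc' : -2 < c := neg_lt_of_lt_mul ht h₂ (by omega)
  have hd : -1 < d := neg_lt_of_lt_mul ht h₃ (by omega)
  have he : -1 < e := neg_lt_of_lt_mul ht h₁ (by omega)
  have ha : 0 ≤ a := by
    by_contra! ha
    have := neg_lt_of_lt_mul (k := 0) ht h₃ (by omega)
    omega
  omega

lemma nonneg_fourth_weight (hn : 3 ≤ n) (hsum : a + b + c + d + e = 1)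
    (hneg : max (-a) 0 + max (-b) 0 + max (-c) 0 + max (-d) 0 + max (-e) 0 ≤ n)
    (h₁ : 0 ≤ a + (n + 1) * e) (h₂ : 0 ≤ b + (n + 1) * c) (h₃ : 0 ≤ a + (n + 1) * d) : 0 ≤ d := by
  have ht : 0 ≤ n + 1 := by omega
  by_contra! hd
  have ha : n + 1 ≤ a := by
    by_contra! ha
    have := neg_lt_of_lt_mul (k := 1) ht h₃ (by omega)
    omega
  have hd' : -2 < d := neg_lt_of_lt_mul ht h₃ (by omega)
  have he : -2 < e := neg_lt_of_lt_mul ht h₁ (by omega)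
  have hc : -1 < c := neg_lt_of_lt_mul ht h₂ (by omega)
  have hb : 0 ≤ b := by
    by_contra! hb
    have := neg_lt_of_lt_mul (k := 0) ht h₂ (by omega)
    omega
  omega

lemma nonneg_weights (hn : 3 ≤ n) (hsum : a + b + c + d + e = 1)
    (hneg : max (-a) 0 + max (-b) 0 + max (-c) 0 + max (-d) 0 + max (-e) 0 ≤ n)
    (h₀ : 0 ≤ n * a + (n + 1) * b) (h₁ : 0 ≤ a + (n + 1) * e) (h₂ : 0 ≤ b + (n + 1) * c)
    (h₃ : 0 ≤ a + (n + 1) * d) : 0 ≤ a ∧ 0 ≤ b ∧ 0 ≤ c ∧ 0 ≤ d ∧ 0 ≤ e := by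
  have ht : 0 ≤ n + 1 := by omega
  have hc : 0 ≤ c := nonneg_third_weight (by omega) hsum hneg h₁ h₂ h₃
  have hd : 0 ≤ d := nonneg_fourth_weight hn hsum hneg h₁ h₂ h₃
  -- Exchanging the second and fourth coordinates exchanges `d` and `e`.
  have he : 0 ≤ e :=
    nonneg_fourth_weight (d := e) (e := d) hn (by omega) (by omega) h₃ h₂ h₁
  have ha : 0 ≤ a := by
    by_contra! ha
    have hd_pos := neg_lt_of_lt_mul (k := 0) ht h₃ (by omega)
    have he_pos := neg_lt_of_lt_mul (k := 0) ht h₁ (by omega)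
    have hab : -1 < a + b := neg_lt_of_lt_mul (w := -a) ht (by linarith) (by omega)
    omega
  have hb : 0 ≤ b := by
    by_contra! hb
    have hc_pos := neg_lt_of_lt_mul (k := 0) ht h₂ (by omega)
    have hab := neg_lt_of_lt_mul (t := n) (w := b) (y := a + b) (k := 0) (by omega)
      (by linarith) (by omega)
    omega
  exact ⟨ha, hb, hc, hd, he⟩

end Weights

lemma negMass_eq_zero_of_mem_NN (hn : 3 ≤ n) {c : Fin 5 →₀ ℤ} (hdeg : c.degree = 1)
    (hNN : Finsupp.linearCombination ℤ (gammaFivePoint n) c ∈ NN 4) (hneg : negMass c ≤ n) :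
    negMass c = 0 := by
  rw [linearCombination_gammaFivePoint] at hNN
  rw [Finsupp.degree_eq_sum, Fin.sum_univ_five] at hdeg
  rw [negMass_eq_sum, Fin.sum_univ_five] at hneg ⊢
  obtain ⟨h0, h1, h2, h3, h4⟩ :=
    nonneg_weights (by exact_mod_cast hn) hdeg hneg (hNN 0) (hNN 1) (hNN 2) (hNN 3)
  omega

lemma Eext_GammaFive (hn : 3 ≤ n) : Eext n (GammaFive n) = GammaFive n := by
  refine Set.Subset.antisymm (fun x hx => ?_)
    (subset_Eext n (GammaFive_subset_NN n))
  rw [← Eext_zero (GammaFive_subset_NN n)]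
  rw [← range_gammaFivePoint, mem_Eext_range_iff] at hx ⊢
  obtain ⟨hxN, c, hdeg, rfl, hneg⟩ := hx
  exact ⟨hxN, c, hdeg, rfl, (negMass_eq_zero_of_mem_NN hn hdeg hxN hneg).le⟩

lemma mem_Eext_succ_GammaFive (n : ℕ) : ![0, 0, (n : ℤ), 0] ∈ Eext (n + 1) (GammaFive n) := by
  rw [← range_gammaFivePoint, mem_Eext_range_iff]
  refine ⟨fun j => by fin_cases j <;> simp,
    Finsupp.equivFunOnFinite.symm ![-(n + 1), n, 0, 1, 1], ?_, ?_, ?_⟩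
  · simp [Finsupp.degree_eq_sum, Fin.sum_univ_five]
  · rw [linearCombination_gammaFivePoint]
    ext j
    fin_cases j <;> simp [mul_add, add_mul]
  · have hn : (0 : ℤ) ≤ n + 1 := by positivity
    simp [negMass_eq_sum, Fin.sum_univ_five, hn]

lemma zero_mem_EextInf_GammaFive (n : ℕ) : 0 ∈ EextInf (n + 1) (GammaFive n) := by
  have hx : ![0, 0, (n : ℤ) + 1, 0] ∈ EextInf (n + 1) (GammaFive n) :=
    subset_EextInf _ (GammaFive_subset_NN n) (by simp [GammaFive])
  have hy := Eext_subset_EextInf _ _ (mem_Eext_succ_GammaFive n)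
  have hstep (i : ℕ) : ![0, 0, (n : ℤ) + 1, 0] + i • (![0, 0, (n : ℤ), 0] - ![0, 0, (n : ℤ) + 1, 0])
      = ![0, 0, (n : ℤ) + 1 - i, 0] := by
    simp [← sub_eq_add_neg]
  have h := add_nsmul_sub_mem_EextInf (k := n + 1) (by omega) hx hy fun i hi j => by
    have hi' : (i : ℤ) ≤ n + 1 := by exact_mod_cast hi
    rw [hstep]
    fin_cases j <;> simp [hi']
  have hend : ![0, 0, (n : ℤ) + 1 - (n + 1 : ℕ), 0] = 0 := by simp
  rwa [hstep, hend] at h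

lemma EextInf_succ_GammaFive (n : ℕ) :
    EextInf (n + 1) (GammaFive n) = cosetGen (GammaFive n) ∩ NN 4 :=
  EextInf_eq_of_zero_mem (by omega) (GammaFive_subset_NN n) (zero_mem_EextInf_GammaFive n)

end GammaFive

/-- Example: for `n ≥ 3`, `E_n(Γ_n) = Γ_n` while `E_{n+1}^∞(Γ_n) = Λ(Γ_n) ∩ ℕ₀⁴`. -/
theorem example_dimension_four_four (n : ℕ) (hn : 3 ≤ n) :
    Eext n (GammaFive n) = GammaFive n ∧
    EextInf (n + 1) (GammaFive n) = cosetGen (GammaFive n) ∩ NN 4 :=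
  ⟨Eext_GammaFive hn, EextInf_succ_GammaFive n⟩

end
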